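/- There exists an odd unimodular lattice L in dimension 36 having minimum norm 4, kissing number 42840, and σ(L) = 12. -/

import Mathlib

open scoped RealInnerProductSpace

noncomputable section

/-- The norm `(x, x)` of a vector `x ∈ ℝⁿ` (squared Euclidean length). -/
def normOf {n : ℕ} (x : EuclideanSpace ℝ (Fin n)) : ℝ := ⟪x, x⟫

/-- The dual `L* = {x ∈ ℝⁿ : (x,y) ∈ ℤ for all y ∈ L}` of a set of vectors. -/
def dualSet {n : ℕ} (L : Set (EuclideanSpace ℝ (Fin n))) : Set (EuclideanSpace ℝ (Fin n)) :=
  {x | ∀ y ∈ L, ∃ m : ℤ, ⟪x, y⟫ = (m : ℝ)}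

/-- `L` is a unimodular lattice: `L = L*`. -/
def IsUnimodularLattice {n : ℕ} (L : Set (EuclideanSpace ℝ (Fin n))) : Prop :=
  L = dualSet L

/-- `L` is odd: some vector of `L` has odd (integral) norm. -/
def IsOddLattice {n : ℕ} (L : Set (EuclideanSpace ℝ (Fin n))) : Prop :=
  ∃ x ∈ L, ∃ m : ℤ, Odd m ∧ normOf x = (m : ℝ)

/-- The even sublattice `L₀ = {x ∈ L : (x,x) even}`. -/
def evenSublattice {n : ℕ} (L : Set (EuclideanSpace ℝ (Fin n))) :
    Set (EuclideanSpace ℝ (Fin n)) :=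
  {x | x ∈ L ∧ ∃ m : ℤ, normOf x = 2 * (m : ℝ)}

/-- The shadow `S(L) = L₀* \ L`. -/
def shadow {n : ℕ} (L : Set (EuclideanSpace ℝ (Fin n))) : Set (EuclideanSpace ℝ (Fin n)) :=
  dualSet (evenSublattice L) \ L

/-- `L` has minimum norm `r`: `r` is the least norm among nonzero vectors of `L`. -/
def HasMinNorm {n : ℕ} (L : Set (EuclideanSpace ℝ (Fin n))) (r : ℝ) : Prop :=
  IsLeast {s : ℝ | ∃ x ∈ L, x ≠ 0 ∧ normOf x = s} r

/-- The shadow `S(L)` has minimum norm `r`. -/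
def HasShadowMinNorm {n : ℕ} (L : Set (EuclideanSpace ℝ (Fin n))) (r : ℝ) : Prop :=
  IsLeast {s : ℝ | ∃ x ∈ shadow L, normOf x = s} r

/-- `σ(L) = r`, i.e. `4 · min(S(L)) = r`. -/
def HasSigma {n : ℕ} (L : Set (EuclideanSpace ℝ (Fin n))) (r : ℝ) : Prop :=
  ∃ s : ℝ, HasShadowMinNorm L s ∧ r = 4 * s

/-- The number of vectors of norm `r` in `L`; when `L` has minimum norm `r`,
this is the kissing number of `L`. -/
def numVecsOfNorm {n : ℕ} (L : Set (EuclideanSpace ℝ (Fin n))) (r : ℝ) : ℕ :=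
  Set.ncard {x ∈ L | normOf x = r}

open Finset Module
open scoped Matrix

/-!
Let `C` be a ternary self-dual code of length `36` and minimum weight `9`. Its Construction A
lattice `A = {x ∈ ℤ³⁶ | x mod 3 ∈ C}`, scaled by `1 / √3`, is unimodular, but has the vectors `3 eᵢ`
of scaled norm `3`. Discard the vectors of `A` with odd coordinate sum and add instead the
translates by `(3/2, …, 3/2)` of those with even sum. The result, again scaled by `1 / √3`, is `L`.
To stay integral we double all vectors, so that norms are those of integer vectors divided by `12`.

The dual of the even sublattice of `L` then consists of the integer vectors that reduce into `C`
modulo `3` and whose entries all have the same parity. Nonzero ones have norm at least `36`, which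
is attained by `6 eᵢ`, a vector outside `L`. So the shadow has minimum norm `36 / 12 = 3`.

Vectors of `L` with odd entries have norm `12` modulo `24` and at least `36`; norm `36` would
require all entries to be `±1`, with product `1`. If no codeword has letters with product `1`,
their norm is therefore at least `60`. The other vectors are `2a` with `a ∈ A` of even norm, hence
of norm at least `12`, and `a` has norm exactly `12` if it is a codeword of weight `12`, or one of
weight `9` with one letter `±1` replaced by `∓2`. So `L` has minimum norm `48 / 12 = 4` and kissing
number `A₁₂ + 9 A₉`. This number is determined: by self-duality `C` has `3 ^ (18 - t)` words
vanishing on any given `t ≤ 8` coordinates, and these moments compute the sum over `c ∈ C` of any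
polynomial of degree `8` in the weight of `c`.

It remains to exhibit a code, and a double negacirculant one does. To bound its minimum weight it
suffices to look at messages of weight at most `3`, since the two halves of a codeword play
symmetric roles and one of them carries at most half of the weight.
-/

section Codes

variable {F ι : Type*} [Field F] [Fintype ι]

/-- A linear code `C ⊆ F^ι` is self-dual if it equals its orthogonal complement under the
standard bilinear form. -/
def IsSelfDual (C : Submodule F (ι → F)) : Prop :=
  ∀ c, c ∈ C ↔ ∀ d ∈ C, c ⬝ᵥ d = 0

theorem IsSelfDual.two_mul_finrank {C : Submodule F (ι → F)} (hC : IsSelfDual C) :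
    2 * finrank F C = Fintype.card ι := by
  classical
  have hmap : C.map (dotProductEquiv F ι).toLinearMap = C.dualAnnihilator := by
    ext φ
    obtain ⟨c, rfl⟩ := (dotProductEquiv F ι).surjective φ
    simp [Submodule.mem_dualAnnihilator, hC c]
  have hrank := Subspace.finrank_add_finrank_dualAnnihilator_eq C
  rw [← hmap, LinearEquiv.finrank_map_eq, finrank_fintype_fun_eq_card] at hrank
  omega

/-- The dual code has no nonzero word supported on `T`, so no nontrivial linear functional vanishes
on the restriction of `C` to `T`. -/
theorem exists_mem_eqOn_of_forall_card_lt {C : Submodule F (ι → F)} {T : Finset ι}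
    [DecidableEq F]
    (hT : ∀ w, (∀ c ∈ C, w ⬝ᵥ c = 0) → w ≠ 0 → #T < hammingNorm w) (v : T → F) :
    ∃ c ∈ C, ∀ i : T, c i = v i := by
  classical
  let restrict : (ι → F) →ₗ[F] (T → F) := LinearMap.funLeft F F (↑)
  suffices C.map restrict = ⊤ by
    obtain ⟨c, hc, rfl⟩ := this.ge (Submodule.mem_top (x := v))
    exact ⟨c, hc, fun i ↦ rfl⟩
  by_contra hne
  obtain ⟨φ, hφ, hle⟩ := Submodule.exists_le_ker_of_lt_top _ (lt_top_iff_ne_top.mpr hne)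
  obtain ⟨u, rfl⟩ := (dotProductEquiv F T).surjective φ
  let w : ι → F := fun i ↦ if h : i ∈ T then u ⟨i, h⟩ else 0
  have hw : ∀ c, w ⬝ᵥ c = u ⬝ᵥ restrict c := fun c ↦ by
    simp only [w, dotProduct, dite_mul, zero_mul]
    rw [← sum_subset (subset_univ T) fun i _ hi ↦ by simp [hi], ← sum_coe_sort]
    simp [restrict, LinearMap.funLeft_apply]
  refine (hT w (fun c hc ↦ ?_) ?_).not_ge (card_le_card fun i hi ↦ ?_)
  · rw [hw]
    exact hle (Submodule.mem_map_of_mem hc)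
  · intro h0
    refine hφ ?_
    have : u = 0 := funext fun i ↦ by simpa [w] using congrFun h0 i
    simp [this]
  · by_contra h
    simp [w, h] at hi

theorem card_vanishing_mul_pow [Fintype F] [DecidableEq F] {C : Submodule F (ι → F)} {T : Finset ι}
    (hT : ∀ w, (∀ c ∈ C, w ⬝ᵥ c = 0) → w ≠ 0 → #T < hammingNorm w) :
    Nat.card {c : C // ∀ i ∈ T, c.1 i = 0} * Fintype.card F ^ #T = Nat.card C := by
  let restrict : C →ₗ[F] (T → F) := LinearMap.funLeft F F (↑) ∘ₗ C.subtype
  have hsurj : Function.Surjective restrict := fun v ↦ by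
    obtain ⟨c, hc, h⟩ := exists_mem_eqOn_of_forall_card_lt hT v
    exact ⟨⟨c, hc⟩, funext h⟩
  have hker : Nat.card {c : C // ∀ i ∈ T, c.1 i = 0} = Nat.card restrict.ker :=
    Nat.card_congr <| Equiv.subtypeEquivRight fun c ↦ by
      simp [restrict, funext_iff, LinearMap.funLeft_apply]
  rw [hker, Submodule.card_eq_card_quotient_mul_card restrict.ker,
    Nat.card_congr (restrict.quotKerEquivOfSurjective hsurj).toEquiv,
    Nat.card_fun, Nat.card_eq_fintype_card (α := F), Nat.card_eq_fintype_card (α := T),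
    Fintype.card_coe, mul_comm]

theorem sum_choose_card_sub_hammingNorm [Fintype F] [DecidableEq F] {C : Submodule F (ι → F)}
    [Fintype C] {t : ℕ}
    (ht : ∀ w, (∀ c ∈ C, w ⬝ᵥ c = 0) → w ≠ 0 → t < hammingNorm w) :
    (∑ c : C, (Fintype.card ι - hammingNorm c.1).choose t) * Fintype.card F ^ t =
      (Fintype.card ι).choose t * Nat.card C := by
  classical
  have hzeros (c : C) : (Fintype.card ι - hammingNorm c.1).choose t =
      #{T ∈ powersetCard t univ | ∀ i ∈ T, c.1 i = 0} := by
    have : Fintype.card ι - hammingNorm c.1 = #{i | c.1 i = 0} := by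
      rw [hammingNorm, ← card_univ, ← card_filter_add_card_filter_not (fun i ↦ c.1 i = 0)]
      simp
    rw [this, ← card_powersetCard]
    congr 1
    ext T
    simp [mem_powersetCard, subset_iff, and_comm]
  calc (∑ c : C, (Fintype.card ι - hammingNorm c.1).choose t) * Fintype.card F ^ t
      = ∑ T ∈ powersetCard t univ, #{c : C | ∀ i ∈ T, c.1 i = 0} * Fintype.card F ^ t := by
        rw [← sum_mul, sum_congr rfl fun c _ ↦ hzeros c]
        simp only [card_filter]
        rw [sum_comm]
    _ = ∑ _ ∈ powersetCard t (univ : Finset ι), Nat.card C := by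
        refine sum_congr rfl fun _ hT ↦ ?_
        obtain rfl := (mem_powersetCard.mp hT).2
        rw [← card_vanishing_mul_pow ht, Nat.card_eq_fintype_card, Fintype.card_subtype]
    _ = (Fintype.card ι).choose t * Nat.card C := by simp

end Codes

section TernaryCodes

variable {ι : Type*} [Fintype ι]

theorem natCast_hammingNorm_eq_dotProduct_self (c : ι → ZMod 3) :
    (hammingNorm c : ZMod 3) = c ⬝ᵥ c := by
  have hsq : ∀ x : ZMod 3, x * x = if x ≠ 0 then 1 else 0 := by decide
  simp [hammingNorm, dotProduct, hsq, card_filter]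

theorem IsSelfDual.three_dvd_hammingNorm {C : Submodule (ZMod 3) (ι → ZMod 3)} (hC : IsSelfDual C)
    {c : ι → ZMod 3} (hc : c ∈ C) : 3 ∣ hammingNorm c := by
  rw [← CharP.cast_eq_zero_iff (ZMod 3) 3, natCast_hammingNorm_eq_dotProduct_self]
  exact (hC c).mp hc c hc

/-- The number `A_w` of codewords of Hamming weight `w` in the code `C`. -/
def weightCount (C : Submodule (ZMod 3) (ι → ZMod 3)) (w : ℕ) : ℕ :=
  Nat.card {c : C // hammingNorm c.1 = w}

/-- Coefficients of the expansion
`264539520 * (z/3).choose 8 = ∑ t, thirdChooseCoeff t * z.choose t`, where `264539520 = 8! * 3⁸`. -/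
def thirdChooseCoeff : ℕ → ℤ
  | 1 => -4188800
  | 2 => 6164480
  | 3 => -5927040
  | 4 => 4314240
  | 5 => -2419200
  | 6 => 1008000
  | 7 => -282240
  | 8 => 40320
  | _ => 0

theorem sum_thirdChooseCoeff_mul_choose {m : ℕ} (hm : m ≤ 12) :
    ∑ t ∈ range 9, thirdChooseCoeff t * ((3 * m).choose t : ℤ) = 264539520 * (m.choose 8 : ℤ) := by
  decide +revert

theorem sum_choose_eight {C : Submodule (ZMod 3) (ι → ZMod 3)} [Fintype C]
    (hC : IsSelfDual C) (hι : Fintype.card ι = 36) (hd : ∀ c ∈ C, c ≠ 0 → 9 ≤ hammingNorm c) :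
    ∑ c : C, ((36 - hammingNorm c.1) / 3).choose 8 = 43335 := by
  have hcard : Nat.card C = 3 ^ 18 := by
    have := hC.two_mul_finrank
    rw [Module.natCard_eq_pow_finrank (K := ZMod 3), Nat.card_zmod]
    congr 1
    omega
  have hmoment (t : ℕ) (ht : t ∈ range 9) :
      ∑ c : C, ((36 - hammingNorm c.1).choose t : ℤ) = Nat.choose 36 t * 3 ^ (18 - t) := by
    rw [mem_range] at ht
    have h := sum_choose_card_sub_hammingNorm (C := C) (t := t) fun w hw hw0 ↦
      ht.trans_le (hd w ((hC w).mpr hw) hw0)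
    rw [hι, hcard, ZMod.card, ← pow_sub_mul_pow 3 (by omega : t ≤ 18), ← mul_assoc] at h
    exact_mod_cast Nat.eq_of_mul_eq_mul_right (by positivity) h
  have hexpand (c : C) : ∑ t ∈ range 9, thirdChooseCoeff t * ((36 - hammingNorm c.1).choose t : ℤ) =
      264539520 * (((36 - hammingNorm c.1) / 3).choose 8 : ℤ) := by
    have hdvd : 3 ∣ 36 - hammingNorm c.1 := Nat.dvd_sub (by norm_num) (hC.three_dvd_hammingNorm c.2)
    rw [← sum_thirdChooseCoeff_mul_choose (by omega), Nat.mul_div_cancel' hdvd]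
  suffices (264539520 : ℤ) * ∑ c : C, (((36 - hammingNorm c.1) / 3).choose 8 : ℤ) =
      264539520 * 43335 by
    exact_mod_cast mul_left_cancel₀ (by norm_num) this
  calc (264539520 : ℤ) * ∑ c : C, (((36 - hammingNorm c.1) / 3).choose 8 : ℤ)
      = ∑ t ∈ range 9, thirdChooseCoeff t * ∑ c : C, ((36 - hammingNorm c.1).choose t : ℤ) := by
        simp_rw [mul_sum, ← hexpand]
        rw [sum_comm]
    _ = ∑ t ∈ range 9, thirdChooseCoeff t * (Nat.choose 36 t * 3 ^ (18 - t)) :=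
        sum_congr rfl fun t ht ↦ by rw [hmoment t ht]
    _ = 264539520 * 43335 := by decide

/-- A word of weight `w` contributes `((36 - w) / 3).choose 8` to the previous sum, which is `495`,
`9`, `1` for `w = 0, 9, 12` and vanishes for `w ≥ 15`. -/
theorem weightCount_twelve_add_nine_mul {C : Submodule (ZMod 3) (ι → ZMod 3)}
    (hC : IsSelfDual C) (hι : Fintype.card ι = 36) (hd : ∀ c ∈ C, c ≠ 0 → 9 ≤ hammingNorm c) :
    weightCount C 12 + 9 * weightCount C 9 = 42840 := by
  have := Fintype.ofFinite C
  have hterm (c : C) : ((36 - hammingNorm c.1) / 3).choose 8 =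
      (if c = 0 then 495 else 0) + (if hammingNorm c.1 = 12 then 1 else 0) +
        9 * (if hammingNorm c.1 = 9 then 1 else 0) := by
    have h3 := hC.three_dvd_hammingNorm c.2
    have h36 := hι ▸ hammingNorm_le_card_fintype (x := c.1)
    by_cases h0 : c = 0
    · rw [h0, Submodule.coe_zero, hammingNorm_zero, if_pos rfl]
      rfl
    · have h9 := hd c c.2 (by simpa using h0)
      generalize hammingNorm c.1 = w at *
      simp only [h0]
      interval_cases w <;> first | omega | rfl
  have hsum := sum_choose_eight hC hι hd
  simp only [hterm, sum_add_distrib, ← mul_sum, ← card_filter, sum_ite_eq', mem_univ,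
    if_true] at hsum
  simp only [weightCount, Nat.card_eq_fintype_card, Fintype.card_subtype]
  omega

end TernaryCodes

section IntegerLattices

variable {ι : Type*}

/-- The unscaled Construction A lattice of `C`: the integral vectors that reduce to codewords
modulo 3. -/
def constructionA (C : Submodule (ZMod 3) (ι → ZMod 3)) : Set (ι → ℤ) :=
  {y | (fun i ↦ (y i : ZMod 3)) ∈ C}

/-- The vectors of `constructionA C` whose coordinates are all even or all odd. After scaling this
is the dual of the even sublattice of `neighborLattice C`. -/
def parityLattice (C : Submodule (ZMod 3) (ι → ZMod 3)) : Set (ι → ℤ) :=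
  {y | y ∈ constructionA C ∧ ∀ i j, y i ≡ y j [ZMOD 2]}

/-- The integral vectors that become, after division by `2 * √3`, the neighbor of the Construction A
lattice `(1 / √3) * constructionA C` in the direction of the all-one vector. -/
def neighborLattice [Fintype ι] (C : Submodule (ZMod 3) (ι → ZMod 3)) : Set (ι → ℤ) :=
  {y | y ∈ parityLattice C ∧ 4 ∣ ∑ i, y i}

/-- The representative with entries in `{-1, 0, 1}` of a ternary word. -/
def centeredLift (c : ι → ZMod 3) : ι → ℤ :=
  fun i ↦ (c i).valMinAbs

@[simp]
theorem intCast_centeredLift (c : ι → ZMod 3) (i : ι) : (centeredLift c i : ZMod 3) = c i :=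
  ZMod.coe_valMinAbs _

theorem intCast_update_centeredLift [DecidableEq ι] (c : ι → ZMod 3) (j : ι) :
    (fun i ↦ (Function.update (centeredLift c) j (-2 * centeredLift c j) i : ZMod 3)) = c := by
  ext i
  rcases eq_or_ne i j with rfl | hi
  · have : ∀ x : ZMod 3, -(2 * x) = x := by decide
    simp [this]
  · simp [hi]

variable {C : Submodule (ZMod 3) (ι → ZMod 3)}

theorem mem_constructionA_of_three_dvd {y : ι → ℤ} (hy : ∀ i, 3 ∣ y i) : y ∈ constructionA C := by
  have : (fun i ↦ (y i : ZMod 3)) = 0 :=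
    funext fun i ↦ (ZMod.intCast_zmod_eq_zero_iff_dvd _ 3).mpr (hy i)
  simp [constructionA, this]

theorem two_smul_mem_constructionA {a : ι → ℤ} :
    2 • a ∈ constructionA C ↔ a ∈ constructionA C := by
  have : (fun i ↦ (((2 • a) i : ℤ) : ZMod 3)) = -fun i ↦ (a i : ZMod 3) := by
    ext i
    have : (2 : ZMod 3) = -1 := rfl
    simp [this]
  simp only [constructionA, Set.mem_ofPred_eq, this, neg_mem_iff]

theorem two_smul_mem_parityLattice {a : ι → ℤ} :
    2 • a ∈ parityLattice C ↔ a ∈ constructionA C := by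
  simp only [parityLattice, Set.mem_ofPred_eq, two_smul_mem_constructionA, and_iff_left_iff_imp]
  intro _ i j
  simp [Int.ModEq]

theorem exists_eq_two_smul_or_forall_odd {y : ι → ℤ} (hy : y ∈ parityLattice C) :
    (∃ a ∈ constructionA C, y = 2 • a) ∨ ∀ i, Odd (y i) := by
  by_cases h : ∀ i, Even (y i)
  · choose a ha using fun i ↦ (h i).two_dvd
    have hya : y = 2 • a := funext fun i ↦ by simp [ha i]
    exact .inl ⟨a, two_smul_mem_parityLattice.mp (hya ▸ hy), hya⟩
  · push Not at h
    obtain ⟨i, hi⟩ := h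
    refine .inr fun j ↦ ?_
    rw [Int.not_even_iff] at hi
    exact Int.odd_iff.mpr (Eq.trans (hy.2 j i) hi)

/-- The amount `a² - r²` by which the square of an integer exceeds the square of its centered
residue `r` modulo 3. -/
def excess (a : ℤ) : ℤ :=
  a * a - (a : ZMod 3).valMinAbs * (a : ZMod 3).valMinAbs

theorem valMinAbs_eq_neg_one_or_zero_or_one (x : ZMod 3) :
    x.valMinAbs = -1 ∨ x.valMinAbs = 0 ∨ x.valMinAbs = 1 := by
  decide +revert

theorem exists_eq_valMinAbs_add_three_mul (a : ℤ) :
    ∃ b, a = (a : ZMod 3).valMinAbs + 3 * b ∧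
      excess a = 3 * (b * (2 * (a : ZMod 3).valMinAbs + 3 * b)) := by
  obtain ⟨b, hb⟩ : 3 ∣ a - (a : ZMod 3).valMinAbs := by
    refine (ZMod.intCast_zmod_eq_zero_iff_dvd _ 3).mp ?_
    simp
  refine ⟨b, by linarith, ?_⟩
  rw [excess]
  linear_combination (a + (a : ZMod 3).valMinAbs + 3 * b) * hb

theorem excess_eq_zero_or_three_le (a : ℤ) :
    a = (a : ZMod 3).valMinAbs ∧ excess a = 0 ∨ 3 ≤ excess a := by
  obtain ⟨b, ha, he⟩ := exists_eq_valMinAbs_add_three_mul a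
  rcases eq_or_ne b 0 with rfl | hb
  · exact .inl ⟨by linarith, by simpa using he⟩
  · right
    rw [he]
    rcases hb.lt_or_gt with hneg | hpos <;>
      rcases valMinAbs_eq_neg_one_or_zero_or_one a with h | h | h <;> rw [h] <;> nlinarith

theorem excess_nonneg (a : ℤ) : 0 ≤ excess a := by
  have := excess_eq_zero_or_three_le a
  omega

theorem excess_eq_three_iff (a : ℤ) :
    excess a = 3 ↔ (a : ZMod 3) ≠ 0 ∧ a = -2 * (a : ZMod 3).valMinAbs := by
  rw [ne_eq, ← ZMod.valMinAbs_eq_zero]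
  constructor
  · intro h
    obtain ⟨b, ha, he⟩ := exists_eq_valMinAbs_add_three_mul a
    have hb : b * (2 * (a : ZMod 3).valMinAbs + 3 * b) = 1 := by linarith
    rcases Int.isUnit_iff.mp (IsUnit.of_mul_eq_one _ hb) with rfl | rfl <;> omega
  · rintro ⟨h0, ha⟩
    have hsq : (a : ZMod 3).valMinAbs * (a : ZMod 3).valMinAbs = 1 := by
      rcases valMinAbs_eq_neg_one_or_zero_or_one a with h | h | h
      · rw [h]; rfl
      · exact absurd h h0
      · rw [h]; rfl
    rw [excess]
    linear_combination (a - 2 * (a : ZMod 3).valMinAbs) * ha + 3 * hsq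

variable [Fintype ι]

theorem two_smul_mem_neighborLattice {a : ι → ℤ} :
    2 • a ∈ neighborLattice C ↔ a ∈ constructionA C ∧ Even (∑ i, a i) := by
  simp only [neighborLattice, Set.mem_ofPred_eq, two_smul_mem_parityLattice, Pi.smul_apply,
    ← smul_sum, even_iff_two_dvd]
  refine and_congr_right fun _ ↦ ?_
  rw [nsmul_eq_mul]
  omega

theorem even_sum_iff_even_dotProduct_self (a : ι → ℤ) : Even (∑ i, a i) ↔ Even (a ⬝ᵥ a) := by
  have : Even (∑ i, a i * (a i - 1)) := by
    simpa only [even_iff_two_dvd] using dvd_sum fun i _ ↦ (Int.even_mul_pred_self (a i)).two_dvd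
  simp only [mul_sub, mul_one, sum_sub_distrib] at this
  rw [dotProduct, (Int.even_sub.mp this)]

theorem three_dvd_dotProduct (hC : IsSelfDual C) {x y : ι → ℤ} (hx : x ∈ constructionA C)
    (hy : y ∈ constructionA C) : 3 ∣ x ⬝ᵥ y := by
  refine (ZMod.intCast_zmod_eq_zero_iff_dvd _ 3).mp ?_
  simpa [dotProduct] using (hC _).mp hx _ hy

theorem four_dvd_dotProduct_two_smul {x a : ι → ℤ} (hx : x ∈ parityLattice C)
    (ha : Even (∑ i, a i)) : 4 ∣ x ⬝ᵥ (2 • a) := by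
  suffices 2 ∣ x ⬝ᵥ a by
    rw [dotProduct_smul, nsmul_eq_mul]
    omega
  rcases isEmpty_or_nonempty ι with _ | ⟨⟨j⟩⟩
  · simp
  have hmod : x ⬝ᵥ a ≡ x j * ∑ i, a i [ZMOD 2] := by
    rw [mul_sum]
    exact Int.ModEq.sum fun i _ ↦ (hx.2 i j).mul_right _
  exact hmod.dvd_iff.mpr (ha.two_dvd.mul_left _)

theorem dotProduct_modEq_of_forall_odd {x y : ι → ℤ} (hx : ∀ i, Odd (x i)) (hy : ∀ i, Odd (y i)) :
    x ⬝ᵥ y ≡ ∑ i, x i + ∑ i, y i - Fintype.card ι [ZMOD 4] := by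
  have hcoord (i : ι) : x i * y i ≡ x i + y i - 1 [ZMOD 4] := by
    obtain ⟨a, ha⟩ := hx i
    obtain ⟨b, hb⟩ := hy i
    rw [ha, hb]
    exact (Int.modEq_iff_dvd.mpr ⟨a * b, by ring⟩).symm
  have := Int.ModEq.sum fun i (_ : i ∈ univ) ↦ hcoord i
  simpa [dotProduct, sum_add_distrib, sum_sub_distrib] using this

theorem dotProduct_self_modEq_of_forall_odd {y : ι → ℤ} (hy : ∀ i, Odd (y i)) :
    y ⬝ᵥ y ≡ Fintype.card ι [ZMOD 8] := by
  have := Int.ModEq.sum fun i (_ : i ∈ univ) ↦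
    (Int.modEq_iff_dvd.mpr (Int.eight_dvd_sq_sub_one_of_odd (hy i))).symm
  simpa [dotProduct, sq] using this

theorem twelve_dvd_dotProduct_of_parityLattice_of_even (hC : IsSelfDual C) {x a : ι → ℤ}
    (hx : x ∈ parityLattice C) (ha : 2 • a ∈ neighborLattice C) : 12 ∣ x ⬝ᵥ (2 • a) := by
  have h3 := three_dvd_dotProduct hC hx.1 ha.1.1
  have h4 := four_dvd_dotProduct_two_smul hx (two_smul_mem_neighborLattice.mp ha).2
  omega

theorem twelve_dvd_dotProduct (hC : IsSelfDual C) (hι : 4 ∣ Fintype.card ι) {x y : ι → ℤ}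
    (hx : x ∈ neighborLattice C) (hy : y ∈ neighborLattice C) : 12 ∣ x ⬝ᵥ y := by
  rcases exists_eq_two_smul_or_forall_odd hy.1 with ⟨a, -, rfl⟩ | hyodd
  · exact twelve_dvd_dotProduct_of_parityLattice_of_even hC hx.1 hy
  rcases exists_eq_two_smul_or_forall_odd hx.1 with ⟨a, -, rfl⟩ | hxodd
  · rw [dotProduct_comm]
    exact twelve_dvd_dotProduct_of_parityLattice_of_even hC hy.1 hx
  have h3 := three_dvd_dotProduct hC hx.1.1 hy.1.1
  have h4 := (dotProduct_modEq_of_forall_odd hxodd hyodd).dvd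
  have hx4 := hx.2
  have hy4 := hy.2
  omega

theorem dotProduct_self_eq_hammingNorm_add (y : ι → ℤ) :
    y ⬝ᵥ y = hammingNorm (fun i ↦ (y i : ZMod 3)) + ∑ i, excess (y i) := by
  have hsq : ∀ x : ZMod 3, x.valMinAbs * x.valMinAbs = if x ≠ 0 then 1 else 0 := by decide
  simp [dotProduct, excess, hsq, hammingNorm, card_filter, sum_sub_distrib]

theorem hammingNorm_le_dotProduct_self (y : ι → ℤ) :
    (hammingNorm (fun i ↦ (y i : ZMod 3)) : ℤ) ≤ y ⬝ᵥ y := by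
  rw [dotProduct_self_eq_hammingNorm_add]
  exact le_add_of_nonneg_right (sum_nonneg fun i _ ↦ excess_nonneg _)

theorem dotProduct_self_eq_hammingNorm_iff {c : ι → ZMod 3} {y : ι → ℤ}
    (hy : (fun i ↦ (y i : ZMod 3)) = c) : y ⬝ᵥ y = hammingNorm c ↔ y = centeredLift c := by
  subst hy
  rw [dotProduct_self_eq_hammingNorm_add, add_eq_left,
    sum_eq_zero_iff_of_nonneg fun i _ ↦ excess_nonneg _]
  refine ⟨fun h ↦ funext fun i ↦ ?_, fun h i _ ↦ ?_⟩
  · have := excess_eq_zero_or_three_le (y i)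
    have := h i (mem_univ i)
    simp only [centeredLift]
    omega
  · have : y i = (y i : ZMod 3).valMinAbs := congrFun h i
    rw [excess, ← this, sub_self]

/-- Coordinates have excess `0` or at least `3`, so a total excess of `3` sits in one coordinate. -/
theorem dotProduct_self_eq_hammingNorm_add_three_iff [DecidableEq ι] {c : ι → ZMod 3} {y : ι → ℤ}
    (hy : (fun i ↦ (y i : ZMod 3)) = c) : y ⬝ᵥ y = hammingNorm c + 3 ↔
      ∃ j, c j ≠ 0 ∧ y = Function.update (centeredLift c) j (-2 * centeredLift c j) := by
  subst hy
  rw [dotProduct_self_eq_hammingNorm_add, add_right_inj]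
  constructor
  · intro hsum
    obtain ⟨j, -, hj⟩ : ∃ j ∈ univ, excess (y j) ≠ 0 :=
      exists_ne_zero_of_sum_ne_zero (by omega)
    have hj3 : 3 ≤ excess (y j) := by
      have := excess_eq_zero_or_three_le (y j)
      omega
    rw [← add_sum_erase _ _ (mem_univ j)] at hsum
    have hrest := sum_nonneg fun i (_ : i ∈ univ.erase j) ↦ excess_nonneg (y i)
    have hzero := (sum_eq_zero_iff_of_nonneg fun i _ ↦ excess_nonneg (y i)).mp
      (by omega : ∑ i ∈ univ.erase j, excess (y i) = 0)
    obtain ⟨hc, hyj⟩ := (excess_eq_three_iff (y j)).mp (by omega)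
    refine ⟨j, hc, Function.eq_update_iff.mpr ⟨hyj, fun i hi ↦ ?_⟩⟩
    have := excess_eq_zero_or_three_le (y i)
    have := hzero i (by simp [hi])
    simp only [centeredLift]
    omega
  · rintro ⟨j, hc, h⟩
    obtain ⟨hyj, hrest⟩ := Function.eq_update_iff.mp h
    rw [sum_eq_single_of_mem j (mem_univ j), (excess_eq_three_iff _).mpr ⟨hc, hyj⟩]
    intro i _ hi
    have : y i = (y i : ZMod 3).valMinAbs := hrest i hi
    rw [excess, ← this, sub_self]

theorem card_dotProduct_self_eq_hammingNorm (c : ι → ZMod 3) :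
    Nat.card {y : ι → ℤ // (fun i ↦ (y i : ZMod 3)) = c ∧ y ⬝ᵥ y = hammingNorm c} = 1 := by
  have heq : ∀ y : ι → ℤ, (fun i ↦ (y i : ZMod 3)) = c ∧ y ⬝ᵥ y = hammingNorm c ↔
      y = centeredLift c := fun y ↦
    ⟨fun h ↦ (dotProduct_self_eq_hammingNorm_iff h.1).mp h.2, fun h ↦ by
      have hc : (fun i ↦ (y i : ZMod 3)) = c := by simp [h]
      exact ⟨hc, (dotProduct_self_eq_hammingNorm_iff hc).mpr h⟩⟩
  simp [heq]

theorem card_dotProduct_self_eq_hammingNorm_add_three (c : ι → ZMod 3) :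
    Nat.card {y : ι → ℤ // (fun i ↦ (y i : ZMod 3)) = c ∧ y ⬝ᵥ y = hammingNorm c + 3} =
      hammingNorm c := by
  classical
  let doubled (j : {j // c j ≠ 0}) : ι → ℤ :=
    Function.update (centeredLift c) j (-2 * centeredLift c j)
  have hinj : Function.Injective doubled := fun i j hij ↦ by
    by_contra hne
    have hval := congrFun hij i
    have h0 : centeredLift c i ≠ 0 := (ZMod.valMinAbs_eq_zero _).not.mpr i.2
    simp only [doubled, Function.update_self,
      Function.update_of_ne (Subtype.coe_ne_coe.mpr hne)] at hval
    omega
  have hrange (y : ι → ℤ) : (fun i ↦ (y i : ZMod 3)) = c ∧ y ⬝ᵥ y = hammingNorm c + 3 ↔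
      y ∈ Set.range doubled := by
    simp only [doubled, Set.mem_range, Subtype.exists, exists_prop]
    constructor
    · rintro ⟨hc, hy⟩
      obtain ⟨j, hj, rfl⟩ := (dotProduct_self_eq_hammingNorm_add_three_iff hc).mp hy
      exact ⟨j, hj, rfl⟩
    · rintro ⟨j, hj, rfl⟩
      have hc := intCast_update_centeredLift c j
      exact ⟨hc, (dotProduct_self_eq_hammingNorm_add_three_iff hc).mpr ⟨j, hj, rfl⟩⟩
  rw [Nat.card_congr (Equiv.subtypeEquivRight hrange)]
  rw [show Nat.card {y // y ∈ Set.range doubled} = Nat.card {j // c j ≠ 0} from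
    Nat.card_range_of_injective hinj, Nat.card_eq_fintype_card, Fintype.card_subtype, hammingNorm]

theorem nine_le_dotProduct_self {C : Submodule (ZMod 3) (ι → ZMod 3)}
    (hd : ∀ c ∈ C, c ≠ 0 → 9 ≤ hammingNorm c) {a : ι → ℤ} (ha : a ∈ constructionA C)
    (h0 : a ≠ 0) : 9 ≤ a ⬝ᵥ a := by
  by_cases hc : (fun i ↦ (a i : ZMod 3)) = 0
  · obtain ⟨j, hj⟩ := Function.ne_iff.mp h0
    obtain ⟨b, hb⟩ := (ZMod.intCast_zmod_eq_zero_iff_dvd _ 3).mp (congrFun hc j)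
    have hle : a j * a j ≤ a ⬝ᵥ a :=
      single_le_sum (f := fun i ↦ a i * a i) (fun i _ ↦ mul_self_nonneg (a i)) (mem_univ j)
    have hb0 : b ≠ 0 := by
      rintro rfl
      exact hj hb
    have : 0 < b * b := mul_self_pos.mpr hb0
    rw [hb] at hle
    push_cast at hle
    linarith
  · exact_mod_cast le_trans (by exact_mod_cast hd _ ha hc) (hammingNorm_le_dotProduct_self a)

theorem card_dotProduct_self_eq_twelve_of_mem {C : Submodule (ZMod 3) (ι → ZMod 3)}
    (hC : IsSelfDual C) (hd : ∀ c ∈ C, c ≠ 0 → 9 ≤ hammingNorm c) (c : C) :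
    Nat.card {y : ι → ℤ // (fun i ↦ (y i : ZMod 3)) = c.1 ∧ y ⬝ᵥ y = 12} =
      (if hammingNorm c.1 = 12 then 1 else 0) + 9 * (if hammingNorm c.1 = 9 then 1 else 0) := by
  by_cases h12 : hammingNorm c.1 = 12
  · simpa [h12] using card_dotProduct_self_eq_hammingNorm c.1
  by_cases h9 : hammingNorm c.1 = 9
  · simpa [h9] using card_dotProduct_self_eq_hammingNorm_add_three c.1
  suffices IsEmpty {y : ι → ℤ // (fun i ↦ (y i : ZMod 3)) = c.1 ∧ y ⬝ᵥ y = 12} by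
    simp [h12, h9]
  refine ⟨fun ⟨y, hyc, hy⟩ ↦ ?_⟩
  have hle := hy ▸ hammingNorm_le_dotProduct_self y
  rw [hyc] at hle
  have h3 := hC.three_dvd_hammingNorm c.2
  have hc0 : c.1 = 0 := by
    by_contra hc0
    have := hd c.1 c.2 hc0
    omega
  have h9dvd : 3 * 3 ∣ y ⬝ᵥ y := dvd_sum fun i _ ↦
    have hi := (ZMod.intCast_zmod_eq_zero_iff_dvd _ 3).mp (congrFun (hyc.trans hc0) i)
    mul_dvd_mul hi hi
  omega

theorem finite_setOf_dotProduct_self_eq (k : ℤ) : {y : ι → ℤ | y ⬝ᵥ y = k}.Finite := by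
  classical
  refine (Set.finite_Icc (fun _ ↦ -k) (fun _ ↦ k)).subset fun y hy ↦ ?_
  have hle (i : ι) : y i * y i ≤ k :=
    hy ▸ single_le_sum (f := fun i ↦ y i * y i) (fun i _ ↦ mul_self_nonneg (y i)) (mem_univ i)
  exact ⟨fun i ↦ show -k ≤ y i by nlinarith [hle i], fun i ↦ show y i ≤ k by nlinarith [hle i]⟩

theorem ncard_constructionA_dotProduct_self_eq_twelve {C : Submodule (ZMod 3) (ι → ZMod 3)}
    (hC : IsSelfDual C) (hd : ∀ c ∈ C, c ≠ 0 → 9 ≤ hammingNorm c) :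
    {y ∈ constructionA C | y ⬝ᵥ y = 12}.ncard = weightCount C 12 + 9 * weightCount C 9 := by
  have := Fintype.ofFinite C
  let sigmaReduction : {y ∈ constructionA C | y ⬝ᵥ y = 12} ≃
      Σ c : C, {y : ι → ℤ // (fun i ↦ (y i : ZMod 3)) = c.1 ∧ y ⬝ᵥ y = 12} :=
    { toFun := fun y ↦ ⟨⟨_, y.2.1⟩, y.1, rfl, y.2.2⟩
      invFun := fun p ↦ ⟨p.2.1, by simp [constructionA, p.2.2.1], p.2.2.2⟩
      left_inv := fun _ ↦ rfl
      right_inv := by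
        rintro ⟨⟨c, hc⟩, y, hyc, hy⟩
        change (fun i ↦ (y i : ZMod 3)) = c at hyc
        subst hyc
        rfl }
  have (c : C) : Finite {y : ι → ℤ // (fun i ↦ (y i : ZMod 3)) = c.1 ∧ y ⬝ᵥ y = 12} :=
    ((finite_setOf_dotProduct_self_eq 12).subset fun _ hy ↦ hy.2).to_subtype
  rw [← Nat.card_coe_set_eq, Nat.card_congr sigmaReduction, Nat.card_sigma]
  simp only [card_dotProduct_self_eq_twelve_of_mem hC hd, sum_add_distrib, ← mul_sum, ← card_filter,
    weightCount, Nat.card_eq_fintype_card, Fintype.card_subtype]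

theorem two_smul_dotProduct_two_smul (a : ι → ℤ) : (2 • a) ⬝ᵥ (2 • a) = 4 * (a ⬝ᵥ a) := by
  rw [smul_dotProduct, dotProduct_smul, smul_smul, nsmul_eq_mul]
  rfl

theorem one_le_mul_self_of_odd {a : ℤ} (ha : Odd a) : 1 ≤ a * a :=
  Int.add_one_le_iff.mpr (mul_self_pos.mpr fun h ↦ by simp [h] at ha)

theorem card_le_dotProduct_self_of_forall_odd {y : ι → ℤ} (hy : ∀ i, Odd (y i)) :
    (Fintype.card ι : ℤ) ≤ y ⬝ᵥ y := by
  have hle : ∀ i ∈ univ, 1 ≤ y i * y i := fun i _ ↦ one_le_mul_self_of_odd (hy i)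
  simpa [dotProduct] using card_nsmul_le_sum univ _ 1 hle

theorem sum_modEq_card_sub_one_add_prod {y : ι → ℤ} (hy : ∀ i, Odd (y i)) :
    ∑ i, y i ≡ Fintype.card ι - 1 + ∏ i, y i [ZMOD 4] := by
  classical
  suffices ∀ s : Finset ι, ∑ i ∈ s, y i ≡ #s - 1 + ∏ i ∈ s, y i [ZMOD 4] from this univ
  intro s
  induction s using Finset.induction_on with
  | empty => rfl
  | insert j s hj ih =>
    rw [sum_insert hj, prod_insert hj, card_insert_of_notMem hj]
    obtain ⟨a, ha⟩ := hy j
    obtain ⟨b, hb⟩ : Odd (∏ i ∈ s, y i) :=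
      prod_induction _ Odd (fun _ _ ↦ Odd.mul) odd_one fun i _ ↦ hy i
    have hprod : y j * ∏ i ∈ s, y i = y j + ∏ i ∈ s, y i - 1 + 4 * (a * b) := by
      rw [ha, hb]
      ring
    rw [hprod, Int.modEq_iff_dvd]
    have := ih.dvd
    push_cast
    omega

variable {C : Submodule (ZMod 3) (ι → ZMod 3)}

theorem thirtySix_le_dotProduct_self_of_mem_parityLattice
    (hd : ∀ c ∈ C, c ≠ 0 → 9 ≤ hammingNorm c) (hι : 36 ≤ Fintype.card ι) {y : ι → ℤ}
    (hy : y ∈ parityLattice C) (h0 : y ≠ 0) : 36 ≤ y ⬝ᵥ y := by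
  rcases exists_eq_two_smul_or_forall_odd hy with ⟨a, ha, rfl⟩ | hodd
  · have := nine_le_dotProduct_self hd ha (right_ne_zero_of_smul h0)
    rw [two_smul_dotProduct_two_smul]
    omega
  · have := card_le_dotProduct_self_of_forall_odd hodd
    omega

/-- Modulo `24` the norm is `12`, and norm `36` would force all coordinates to be `±1` with product
`1`. -/
theorem sixty_le_dotProduct_self_of_forall_odd (hC : IsSelfDual C) (hι : Fintype.card ι = 36)
    (hprod : ∀ c ∈ C, ∏ i, c i ≠ 1) {y : ι → ℤ} (hy : y ∈ neighborLattice C)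
    (hodd : ∀ i, Odd (y i)) : 60 ≤ y ⬝ᵥ y := by
  have h3 := three_dvd_dotProduct hC hy.1.1 hy.1.1
  have h8 := (dotProduct_self_modEq_of_forall_odd hodd).dvd
  have hle := card_le_dotProduct_self_of_forall_odd hodd
  suffices y ⬝ᵥ y ≠ 36 by omega
  intro h36
  have hunit (i : ι) : IsUnit (y i) := by
    have hsq : ∀ j ∈ univ, 1 ≤ y j * y j := fun j _ ↦ one_le_mul_self_of_odd (hodd j)
    have hsum : ∑ _ : ι, (1 : ℤ) = ∑ j, y j * y j := by
      rw [← dotProduct, h36]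
      simp [hι]
    exact IsUnit.of_mul_eq_one _ ((sum_eq_sum_iff_of_le hsq).mp hsum i (mem_univ i)).symm
  have hmod := (sum_modEq_card_sub_one_add_prod hodd).dvd
  have hsum := hy.2
  have hprod1 : ∏ i, y i = 1 := by
    have := Int.isUnit_iff.mp (IsUnit.prod_univ_iff.mpr hunit)
    omega
  refine hprod _ hy.1.1 ?_
  rw [← Int.cast_prod, hprod1, Int.cast_one]

theorem fortyEight_le_dotProduct_self_of_mem_neighborLattice (hC : IsSelfDual C)
    (hd : ∀ c ∈ C, c ≠ 0 → 9 ≤ hammingNorm c) (hι : Fintype.card ι = 36)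
    (hprod : ∀ c ∈ C, ∏ i, c i ≠ 1) {y : ι → ℤ} (hy : y ∈ neighborLattice C) (h0 : y ≠ 0) :
    48 ≤ y ⬝ᵥ y := by
  rcases exists_eq_two_smul_or_forall_odd hy.1 with ⟨a, ha, rfl⟩ | hodd
  · have h9 := nine_le_dotProduct_self hd ha (right_ne_zero_of_smul h0)
    have h3 := three_dvd_dotProduct hC ha ha
    have h2 := (even_sum_iff_even_dotProduct_self a).mp (two_smul_mem_neighborLattice.mp hy).2
    rw [even_iff_two_dvd] at h2
    rw [two_smul_dotProduct_two_smul]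
    omega
  · have := sixty_le_dotProduct_self_of_forall_odd hC hι hprod hy hodd
    omega

theorem neighborLattice_dotProduct_self_eq_fortyEight (hC : IsSelfDual C)
    (hι : Fintype.card ι = 36) (hprod : ∀ c ∈ C, ∏ i, c i ≠ 1) :
    {y ∈ neighborLattice C | y ⬝ᵥ y = 48} =
      (fun a ↦ 2 • a) '' {a ∈ constructionA C | a ⬝ᵥ a = 12} := by
  ext y
  constructor
  · rintro ⟨hy, h48⟩
    rcases exists_eq_two_smul_or_forall_odd hy.1 with ⟨a, ha, rfl⟩ | hodd
    · rw [two_smul_dotProduct_two_smul] at h48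
      exact ⟨a, ⟨ha, by omega⟩, rfl⟩
    · have := sixty_le_dotProduct_self_of_forall_odd hC hι hprod hy hodd
      omega
  · rintro ⟨a, ⟨ha, h12⟩, rfl⟩
    refine ⟨two_smul_mem_neighborLattice.mpr ⟨ha, ?_⟩, ?_⟩
    · rw [even_sum_iff_even_dotProduct_self, h12]
      decide
    · rw [two_smul_dotProduct_two_smul, h12]
      rfl

theorem ncard_neighborLattice_dotProduct_self_eq_fortyEight (hC : IsSelfDual C)
    (hd : ∀ c ∈ C, c ≠ 0 → 9 ≤ hammingNorm c) (hι : Fintype.card ι = 36)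
    (hprod : ∀ c ∈ C, ∏ i, c i ≠ 1) :
    {y ∈ neighborLattice C | y ⬝ᵥ y = 48}.ncard = 42840 := by
  rw [neighborLattice_dotProduct_self_eq_fortyEight hC hι hprod,
    Set.ncard_image_of_injective _ (smul_right_injective _ two_ne_zero),
    ncard_constructionA_dotProduct_self_eq_twelve hC hd, weightCount_twelve_add_nine_mul hC hι hd]

theorem forall_dvd_dotProduct_even_iff_mem_parityLattice (hC : IsSelfDual C) {z : ι → ℤ} :
    (∀ a, 2 • a ∈ neighborLattice C → 12 ∣ z ⬝ᵥ (2 • a)) ↔ z ∈ parityLattice C := by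
  classical
  refine ⟨fun h ↦ ?_, fun hz a ha ↦ twelve_dvd_dotProduct_of_parityLattice_of_even hC hz ha⟩
  have hsix (a : ι → ℤ) (ha : a ∈ constructionA C) (heven : Even (∑ i, a i)) : 6 ∣ z ⬝ᵥ a := by
    have := h a (two_smul_mem_neighborLattice.mpr ⟨ha, heven⟩)
    rw [dotProduct_smul, nsmul_eq_mul] at this
    omega
  refine ⟨(hC _).mpr fun c hc ↦ ?_, fun i j ↦ ?_⟩
  · have hmem : 2 • centeredLift c ∈ constructionA C :=
      two_smul_mem_constructionA.mpr (by simpa [constructionA] using hc)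
    have hdvd : 3 ∣ z ⬝ᵥ centeredLift c := by
      have := hsix _ hmem (by simp [← mul_sum])
      rw [dotProduct_smul, nsmul_eq_mul] at this
      omega
    simpa [dotProduct] using (ZMod.intCast_zmod_eq_zero_iff_dvd _ 3).mpr hdvd
  · have := hsix (Pi.single i 3 - Pi.single j 3)
      (mem_constructionA_of_three_dvd fun k ↦ by
        simp only [Pi.sub_apply, Pi.single_apply]
        split_ifs <;> simp) (by simp)
    simp only [dotProduct_sub, dotProduct_single] at this
    rw [Int.modEq_iff_dvd]
    omega

theorem three_mem_neighborLattice (hι : 4 ∣ Fintype.card ι) : (fun _ ↦ 3) ∈ neighborLattice C := by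
  refine ⟨⟨mem_constructionA_of_three_dvd fun _ ↦ dvd_rfl, fun _ _ ↦ rfl⟩, ?_⟩
  rw [sum_const, card_univ, nsmul_eq_mul]
  exact (Int.natCast_dvd_natCast.mpr hι).mul_right 3

theorem forall_dvd_dotProduct_iff_mem_neighborLattice (hC : IsSelfDual C)
    (hι : 4 ∣ Fintype.card ι) {z : ι → ℤ} :
    (∀ y ∈ neighborLattice C, 12 ∣ z ⬝ᵥ y) ↔ z ∈ neighborLattice C := by
  refine ⟨fun h ↦ ⟨?_, ?_⟩, fun hz y hy ↦ twelve_dvd_dotProduct hC hι hz hy⟩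
  · exact (forall_dvd_dotProduct_even_iff_mem_parityLattice hC).mp fun a ha ↦ h _ ha
  · have := h _ (three_mem_neighborLattice hι)
    simp only [dotProduct, ← sum_mul] at this
    omega

end IntegerLattices

section Embedding

variable {n : ℕ}

/-- The vector of norm `(x ⬝ᵥ x) / r` in Euclidean space that is proportional to `x`; it scales
integral vectors to the lattices under study, with `r = 12`. -/
def scaledEmbed (r : ℕ) (x : Fin n → ℤ) : EuclideanSpace ℝ (Fin n) :=
  (√r)⁻¹ • WithLp.toLp 2 fun i ↦ (x i : ℝ)

theorem scaledEmbed_zero (r : ℕ) : scaledEmbed r (0 : Fin n → ℤ) = 0 := by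
  ext i
  simp [scaledEmbed]

theorem inner_scaledEmbed (r : ℕ) (u : EuclideanSpace ℝ (Fin n)) (y : Fin n → ℤ) :
    ⟪u, scaledEmbed r y⟫ = (√r)⁻¹ * ∑ i, u i * y i := by
  simp [scaledEmbed, inner_smul_right, PiLp.inner_apply, mul_comm]

theorem inner_scaledEmbed_scaledEmbed (r : ℕ) (x y : Fin n → ℤ) :
    ⟪scaledEmbed r x, scaledEmbed r y⟫ = ((x ⬝ᵥ y : ℤ) : ℝ) / r := by
  have hsqrt : (√r)⁻¹ * (√r)⁻¹ = (r : ℝ)⁻¹ := by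
    rw [← mul_inv, Real.mul_self_sqrt r.cast_nonneg]
  rw [inner_scaledEmbed, div_eq_inv_mul, ← hsqrt, mul_assoc]
  simp [scaledEmbed, dotProduct, mul_sum, mul_assoc]

theorem normOf_scaledEmbed (r : ℕ) (x : Fin n → ℤ) :
    normOf (scaledEmbed r x) = ((x ⬝ᵥ x : ℤ) : ℝ) / r :=
  inner_scaledEmbed_scaledEmbed r x x

theorem scaledEmbed_injective {r : ℕ} (hr : r ≠ 0) :
    Function.Injective (scaledEmbed r : (Fin n → ℤ) → EuclideanSpace ℝ (Fin n)) := by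
  intro x y h
  have hne : (√r)⁻¹ ≠ 0 := by positivity
  have := WithLp.toLp_injective 2 (smul_right_injective _ hne h)
  exact funext fun i ↦ by exact_mod_cast congrFun this i

theorem exists_int_inner_scaledEmbed_iff {r : ℕ} (hr : r ≠ 0) (x y : Fin n → ℤ) :
    (∃ m : ℤ, ⟪scaledEmbed r x, scaledEmbed r y⟫ = (m : ℝ)) ↔ (r : ℤ) ∣ x ⬝ᵥ y := by
  have hr' : (r : ℝ) ≠ 0 := by positivity
  simp only [inner_scaledEmbed_scaledEmbed, div_eq_iff hr']
  constructor
  · rintro ⟨m, hm⟩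
    exact ⟨m, by rw [mul_comm]; exact_mod_cast hm⟩
  · rintro ⟨m, hm⟩
    exact ⟨m, by rw [hm]; push_cast; ring⟩

/-- A vector with integral inner products against the vectors `r • eᵢ` is itself the image of an
integral vector. -/
theorem dualSet_image_scaledEmbed {r : ℕ} (hr : r ≠ 0) {S : Set (Fin n → ℤ)}
    (hS : ∀ i, Pi.single i (r : ℤ) ∈ S) :
    dualSet (scaledEmbed r '' S) = scaledEmbed r '' {z | ∀ y ∈ S, (r : ℤ) ∣ z ⬝ᵥ y} := by
  ext u
  simp only [dualSet, Set.forall_mem_image, Set.mem_ofPred_eq]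
  constructor
  · intro hu
    choose z hz using fun i ↦ hu (hS i)
    have hsqrt : √r * √r = r := Real.mul_self_sqrt r.cast_nonneg
    obtain rfl : u = scaledEmbed r z := by
      ext i
      have hi : (√r)⁻¹ * (u i * r) = z i := by
        simpa [inner_scaledEmbed, Pi.single_apply] using hz i
      have hne : √(r : ℝ) ≠ 0 := by positivity
      simp only [scaledEmbed, PiLp.smul_apply, smul_eq_mul, ← hi]
      field_simp
      linear_combination u i * hsqrt
    exact ⟨z, fun y hy ↦ (exists_int_inner_scaledEmbed_iff hr z y).mp (hu hy), rfl⟩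
  · rintro ⟨z, hz, rfl⟩ y hy
    exact (exists_int_inner_scaledEmbed_iff hr z y).mpr (hz y hy)

theorem numVecsOfNorm_image_scaledEmbed {r : ℕ} (hr : r ≠ 0) (S : Set (Fin n → ℤ)) (k : ℤ) :
    numVecsOfNorm (scaledEmbed r '' S) (k / r) = {y ∈ S | y ⬝ᵥ y = k}.ncard := by
  have hr' : (r : ℝ) ≠ 0 := by positivity
  rw [numVecsOfNorm, ← Set.ncard_image_of_injective _ (scaledEmbed_injective hr)]
  congr 1
  ext x
  constructor
  · rintro ⟨⟨y, hy, rfl⟩, hnorm⟩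
    rw [normOf_scaledEmbed, div_left_inj' hr', Int.cast_inj] at hnorm
    exact ⟨y, ⟨hy, hnorm⟩, rfl⟩
  · rintro ⟨y, ⟨hy, rfl⟩, rfl⟩
    exact ⟨⟨y, hy, rfl⟩, normOf_scaledEmbed r y⟩

end Embedding

section NeighborLattice

variable {n : ℕ}

variable {C : Submodule (ZMod 3) (Fin n → ZMod 3)}

theorem single_mem_constructionA {k : ℤ} (hk : 3 ∣ k) (i : Fin n) :
    Pi.single i k ∈ constructionA C := by
  refine mem_constructionA_of_three_dvd fun j ↦ ?_
  rw [Pi.single_apply]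
  split_ifs
  exacts [hk, dvd_zero 3]

theorem two_smul_single_mem_neighborLattice_iff {k : ℤ} (hk : 3 ∣ k) (i : Fin n) :
    2 • Pi.single i k ∈ neighborLattice C ↔ Even k := by
  rw [two_smul_mem_neighborLattice, sum_pi_single', if_pos (mem_univ i),
    and_iff_right (single_mem_constructionA hk i)]

theorem two_smul_single_six (i : Fin n) : (2 • Pi.single i 6 : Fin n → ℤ) = Pi.single i 12 := by
  rw [← Pi.single_smul]
  rfl

theorem single_twelve_mem_neighborLattice (i : Fin n) : Pi.single i 12 ∈ neighborLattice C := by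
  rw [← two_smul_single_six]
  exact (two_smul_single_mem_neighborLattice_iff (by norm_num) i).mpr (by decide)

theorem zero_mem_neighborLattice : 0 ∈ neighborLattice C := by
  rw [← smul_zero 2]
  exact two_smul_mem_neighborLattice.mpr
    ⟨mem_constructionA_of_three_dvd fun _ ↦ dvd_zero 3, by simp⟩

theorem isUnimodularLattice_image_neighborLattice (hC : IsSelfDual C) (hn : 4 ∣ n) :
    IsUnimodularLattice (scaledEmbed 12 '' neighborLattice C) := by
  rw [IsUnimodularLattice, dualSet_image_scaledEmbed (by norm_num)
    single_twelve_mem_neighborLattice]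
  congr 1
  ext z
  exact (forall_dvd_dotProduct_iff_mem_neighborLattice hC (by simpa using hn)).symm

theorem isOddLattice_image_neighborLattice (hn : n % 8 = 4) :
    IsOddLattice (scaledEmbed 12 '' neighborLattice C) := by
  obtain ⟨k, rfl⟩ : ∃ k, n = 4 * (2 * k + 1) := ⟨n / 8, by omega⟩
  refine ⟨_, ⟨_, three_mem_neighborLattice (by simp), rfl⟩, 3 * (2 * k + 1), ?_, ?_⟩
  · exact Int.odd_mul.mpr ⟨by decide, odd_two_mul_add_one _⟩
  · rw [normOf_scaledEmbed]
    simp only [dotProduct, sum_const, card_univ, Fintype.card_fin, nsmul_eq_mul]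
    push_cast
    ring

/-- A vector with odd coordinates has norm `≡ n ≡ 4` modulo `8`, one with even coordinates has norm
divisible by `24`. -/
theorem evenSublattice_image_neighborLattice (hC : IsSelfDual C) (hn : n % 8 = 4) :
    evenSublattice (scaledEmbed 12 '' neighborLattice C) =
      scaledEmbed 12 '' {y ∈ neighborLattice C | ∃ a, y = 2 • a} := by
  ext x
  constructor
  · rintro ⟨⟨y, hy, rfl⟩, m, hm⟩
    refine ⟨y, ⟨hy, ?_⟩, rfl⟩
    rcases exists_eq_two_smul_or_forall_odd hy.1 with ⟨a, -, rfl⟩ | hodd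
    · exact ⟨a, rfl⟩
    · have hmod := (dotProduct_self_modEq_of_forall_odd hodd).dvd
      rw [Fintype.card_fin] at hmod
      rw [normOf_scaledEmbed, div_eq_iff (by norm_num)] at hm
      have : y ⬝ᵥ y = 2 * m * 12 := by exact_mod_cast hm
      omega
  · rintro ⟨_, ⟨hy, a, rfl⟩, rfl⟩
    refine ⟨⟨_, hy, rfl⟩, ?_⟩
    obtain ⟨ha, heven⟩ := two_smul_mem_neighborLattice.mp hy
    have h3 := three_dvd_dotProduct hC ha ha
    have h2 := ((even_sum_iff_even_dotProduct_self a).mp heven).two_dvd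
    obtain ⟨m, hm⟩ : 6 ∣ a ⬝ᵥ a := by omega
    refine ⟨m, ?_⟩
    rw [normOf_scaledEmbed, two_smul_dotProduct_two_smul, hm]
    push_cast
    ring

theorem dualSet_evenSublattice_image_neighborLattice (hC : IsSelfDual C) (hn : n % 8 = 4) :
    dualSet (evenSublattice (scaledEmbed 12 '' neighborLattice C)) =
      scaledEmbed 12 '' parityLattice C := by
  rw [evenSublattice_image_neighborLattice hC hn, dualSet_image_scaledEmbed (by norm_num)]
  · congr 1
    ext z
    rw [← forall_dvd_dotProduct_even_iff_mem_parityLattice hC]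
    exact ⟨fun h a ha ↦ h _ ⟨ha, a, rfl⟩, by rintro h _ ⟨ha, a, rfl⟩; exact h a ha⟩
  · exact fun i ↦ ⟨single_twelve_mem_neighborLattice i, _, (two_smul_single_six i).symm⟩

theorem shadow_image_neighborLattice (hC : IsSelfDual C) (hn : n % 8 = 4) :
    _root_.shadow (scaledEmbed 12 '' neighborLattice C) =
      scaledEmbed 12 '' (parityLattice C \ neighborLattice C) := by
  rw [_root_.shadow, dualSet_evenSublattice_image_neighborLattice hC hn,
    Set.image_sdiff (scaledEmbed_injective (by norm_num))]

theorem hasSigma_image_neighborLattice (hC : IsSelfDual C) (hn : n % 8 = 4) (hn' : 36 ≤ n)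
    (hd : ∀ c ∈ C, c ≠ 0 → 9 ≤ hammingNorm c) :
    HasSigma (scaledEmbed 12 '' neighborLattice C) 12 := by
  refine ⟨3, ?_, by norm_num⟩
  rw [HasShadowMinNorm, shadow_image_neighborLattice hC hn]
  constructor
  · let i : Fin n := ⟨0, by omega⟩
    refine ⟨_, ⟨2 • Pi.single i 3, ⟨?_, fun h ↦ ?_⟩, rfl⟩, ?_⟩
    · exact two_smul_mem_parityLattice.mpr (single_mem_constructionA dvd_rfl i)
    · exact absurd ((two_smul_single_mem_neighborLattice_iff dvd_rfl i).mp h) (by decide)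
    · rw [normOf_scaledEmbed, two_smul_dotProduct_two_smul, single_dotProduct, Pi.single_eq_same]
      norm_num
  · rintro _ ⟨_, ⟨y, ⟨hy, hyN⟩, rfl⟩, rfl⟩
    have h0 : y ≠ 0 := fun h ↦ hyN (h ▸ zero_mem_neighborLattice)
    have h36 := thirtySix_le_dotProduct_self_of_mem_parityLattice hd (by simpa using hn') hy h0
    rw [normOf_scaledEmbed, le_div_iff₀ (by norm_num)]
    exact_mod_cast h36

theorem numVecsOfNorm_four_image_neighborLattice {C : Submodule (ZMod 3) (Fin 36 → ZMod 3)}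
    (hC : IsSelfDual C) (hd : ∀ c ∈ C, c ≠ 0 → 9 ≤ hammingNorm c)
    (hprod : ∀ c ∈ C, ∏ i, c i ≠ 1) :
    numVecsOfNorm (scaledEmbed 12 '' neighborLattice C) 4 = 42840 := by
  have h := numVecsOfNorm_image_scaledEmbed (r := 12) (by norm_num) (neighborLattice C) 48
  rw [ncard_neighborLattice_dotProduct_self_eq_fortyEight hC hd (by simp) hprod] at h
  rw [← h]
  norm_num

theorem hasMinNorm_four_image_neighborLattice {C : Submodule (ZMod 3) (Fin 36 → ZMod 3)}
    (hC : IsSelfDual C) (hd : ∀ c ∈ C, c ≠ 0 → 9 ≤ hammingNorm c)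
    (hprod : ∀ c ∈ C, ∏ i, c i ≠ 1) :
    HasMinNorm (scaledEmbed 12 '' neighborLattice C) 4 := by
  constructor
  · obtain ⟨x, hx, h4⟩ : {x ∈ scaledEmbed 12 '' neighborLattice C | normOf x = 4}.Nonempty := by
      refine Set.nonempty_of_ncard_ne_zero ?_
      rw [← numVecsOfNorm, numVecsOfNorm_four_image_neighborLattice hC hd hprod]
      norm_num
    refine ⟨x, hx, ?_, h4⟩
    rintro rfl
    simp [normOf] at h4
  · rintro _ ⟨_, ⟨y, hy, rfl⟩, h0, rfl⟩
    have hy0 : y ≠ 0 := fun h ↦ h0 (h ▸ scaledEmbed_zero 12)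
    have h48 := fortyEight_le_dotProduct_self_of_mem_neighborLattice hC hd (by simp) hprod hy hy0
    rw [normOf_scaledEmbed, le_div_iff₀ (by norm_num)]
    exact_mod_cast h48

end NeighborLattice

section SystematicCodes

variable {F : Type*} [Field F] {k m : ℕ}

theorem append_dotProduct_append (u x : Fin k → F) (v y : Fin m → F) :
    Fin.append u v ⬝ᵥ Fin.append x y = u ⬝ᵥ x + v ⬝ᵥ y := by
  simp only [dotProduct, Fin.sum_univ_add, Fin.append_left, Fin.append_right]

theorem hammingNorm_append [DecidableEq F] (u : Fin k → F) (v : Fin m → F) :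
    hammingNorm (Fin.append u v) = hammingNorm u + hammingNorm v := by
  simp only [hammingNorm, card_filter, Fin.sum_univ_add, Fin.append_left, Fin.append_right]

/-- The encoder of the linear code with generator matrix `(1 | S)`. -/
def systematicEncoder (S : Matrix (Fin k) (Fin m) F) : (Fin k → F) →ₗ[F] (Fin (k + m) → F) where
  toFun u := Fin.append u (u ᵥ* S)
  map_add' u v := by
    rw [Matrix.add_vecMul]
    exact funext <| Fin.addCases (by simp) (by simp)
  map_smul' a u := by
    rw [Matrix.smul_vecMul]
    exact funext <| Fin.addCases (by simp) (by simp)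

theorem systematicEncoder_apply (S : Matrix (Fin k) (Fin m) F) (u : Fin k → F) :
    systematicEncoder S u = Fin.append u (u ᵥ* S) :=
  rfl

theorem systematicEncoder_castAdd (S : Matrix (Fin k) (Fin m) F) (u : Fin k → F) (i : Fin k) :
    systematicEncoder S u (Fin.castAdd m i) = u i :=
  Fin.append_left _ _ i

theorem systematicEncoder_eq_sum (S : Matrix (Fin k) (Fin m) F) (u : Fin k → F) :
    systematicEncoder S u = ∑ i, u i • Fin.append (Pi.single i 1) (S i) := by
  refine funext <| Fin.addCases (fun j ↦ ?_) fun j ↦ ?_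
  · simp [systematicEncoder_castAdd, Pi.single_apply]
  · simp [systematicEncoder_apply, Matrix.vecMul, dotProduct]

theorem isSelfDual_range_systematicEncoder {S : Matrix (Fin k) (Fin k) F} (hS : S * Sᵀ = -1) :
    IsSelfDual (LinearMap.range (systematicEncoder S)) := by
  have hS' : Sᵀ * S = -1 := by
    rw [← neg_eq_iff_eq_neg, ← Matrix.neg_mul, mul_eq_one_comm, Matrix.mul_neg, hS, neg_neg]
  intro c
  constructor
  · rintro ⟨u, rfl⟩ _ ⟨v, rfl⟩
    rw [systematicEncoder_apply, systematicEncoder_apply, append_dotProduct_append,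
      ← Matrix.dotProduct_mulVec, ← Matrix.vecMul_transpose, Matrix.vecMul_vecMul, hS,
      Matrix.vecMul_neg, Matrix.vecMul_one, dotProduct_neg, add_neg_cancel]
  · intro h
    obtain ⟨a, b, rfl⟩ : ∃ a b, c = Fin.append a b := ⟨_, _, Fin.append_castAdd_natAdd.symm⟩
    have ha : a + b ᵥ* Sᵀ = 0 := by
      refine dotProduct_eq_zero _ fun v ↦ ?_
      rw [← h _ ⟨v, rfl⟩, systematicEncoder_apply, append_dotProduct_append, add_dotProduct,
        Matrix.dotProduct_vecMul_transpose, dotProduct_comm b]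
    refine ⟨a, ?_⟩
    rw [systematicEncoder_apply, eq_neg_of_add_eq_zero_left ha, Matrix.neg_vecMul,
      Matrix.vecMul_vecMul, hS', Matrix.vecMul_neg, Matrix.vecMul_one, neg_neg]

/-- Since `S * S = -1`, a codeword `(u, v)` comes with the codeword `(v, -u)` of the same weight, so
the lighter half may be taken as the message. -/
theorem exists_two_mul_hammingNorm_le [DecidableEq F] {S : Matrix (Fin k) (Fin k) F}
    (hS : S * S = -1) {c : Fin (k + k) → F} (hc : c ∈ LinearMap.range (systematicEncoder S))
    (h0 : c ≠ 0) :
    ∃ u ≠ 0, 2 * hammingNorm u ≤ hammingNorm c ∧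
      hammingNorm (systematicEncoder S u) = hammingNorm c := by
  obtain ⟨u, rfl⟩ := hc
  have hu : u ≠ 0 := fun h ↦ h0 (by rw [h, map_zero])
  have huSS : u ᵥ* S ᵥ* S = -u := by
    rw [Matrix.vecMul_vecMul, hS, Matrix.vecMul_neg, Matrix.vecMul_one]
  rcases le_total (hammingNorm u) (hammingNorm (u ᵥ* S)) with h | h
  · refine ⟨u, hu, ?_, rfl⟩
    rw [systematicEncoder_apply, hammingNorm_append]
    omega
  · refine ⟨u ᵥ* S, fun h ↦ hu ?_, ?_, ?_⟩
    · rw [← neg_eq_zero, ← huSS, h, Matrix.zero_vecMul]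
    · rw [systematicEncoder_apply, hammingNorm_append]
      omega
    · have hneg : hammingNorm (-u) = hammingNorm u := by simp [hammingNorm]
      simp only [systematicEncoder_apply, hammingNorm_append, huSS, hneg, add_comm]

end SystematicCodes

section TernaryWords

/-- A ternary word stored as two bit masks, of the positions where the letter is `1` and of the
positions where it is `2`; bits beyond the length of the word are ignored. -/
structure TernaryWord where
  ones : ℕ
  twos : ℕ

namespace TernaryWord

/-- The masks of `x` describe the word `v`. -/
def Represents {m : ℕ} (x : TernaryWord) (v : Fin m → ZMod 3) : Prop :=
  ∀ i : Fin m, x.ones.testBit i = (v i == 1) ∧ x.twos.testBit i = (v i == 2)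

/-- Letterwise addition by bitwise operations. -/
def add (x y : TernaryWord) : TernaryWord :=
  let t := (x.ones ||| y.twos) ^^^ (x.twos ||| y.ones)
  ⟨(x.twos ||| y.twos) ^^^ t, (x.ones ||| y.ones) ^^^ t⟩

/-- Letterwise negation. -/
def neg (x : TernaryWord) : TernaryWord :=
  ⟨x.twos, x.ones⟩

/-- The mask of the nonzero letters among the first `m`. -/
def support (m : ℕ) (x : TernaryWord) : ℕ :=
  (x.ones ||| x.twos) % 2 ^ m

/-- The letter at position `i`; `1` takes precedence if both masks contain `i`. -/
def letter (x : TernaryWord) (i : ℕ) : ZMod 3 :=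
  if x.ones.testBit i then 1 else if x.twos.testBit i then 2 else 0

variable {m : ℕ} {x y : TernaryWord} {v w : Fin m → ZMod 3}

theorem Represents.add (hx : x.Represents v) (hy : y.Represents w) :
    (x.add y).Represents (v + w) := by
  intro i
  simp only [TernaryWord.add, Nat.testBit_xor, Nat.testBit_or, hx i, hy i, Pi.add_apply]
  generalize v i = a, w i = b
  decide +revert

theorem Represents.neg (hx : x.Represents v) : x.neg.Represents (-v) := by
  intro i
  simp only [TernaryWord.neg, hx i, Pi.neg_apply]
  generalize v i = a
  decide +revert

theorem Represents.letter_eq (hx : x.Represents v) (i : Fin m) : x.letter i = v i := by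
  simp only [letter, hx i]
  generalize v i = a
  decide +revert

theorem Represents.testBit_support (hx : x.Represents v) (i : Fin m) :
    (x.support m).testBit i = (v i != 0) := by
  simp only [support, Nat.testBit_mod_two_pow, Nat.testBit_or, hx i, i.isLt]
  generalize v i = a
  decide +revert

theorem Represents.support_eq_of_forall_ne_zero (hx : x.Represents v) (hv : ∀ i, v i ≠ 0) :
    x.support m = 2 ^ m - 1 := by
  refine Nat.eq_of_testBit_eq fun i ↦ ?_
  rcases lt_or_ge i m with hi | hi
  · simpa [hi] using (hx.testBit_support ⟨i, hi⟩).trans (bne_iff_ne.mpr (hv _))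
  · simp [support, Nat.testBit_mod_two_pow, hi.not_gt]

end TernaryWord

/-- Tests whether `z` has at least `k` set bits, clearing the lowest one at each step. -/
def hasBits : ℕ → ℕ → Bool
  | 0, _ => true
  | k + 1, z => z != 0 && hasBits k (z &&& (z - 1))

theorem le_card_testBit_of_hasBits {k m z : ℕ} (h : hasBits k z) (hz : z < 2 ^ m) :
    k ≤ #{i : Fin m | z.testBit i} := by
  induction k generalizing z with
  | zero => exact Nat.zero_le _
  | succ k ih =>
    simp only [hasBits, Bool.and_eq_true, bne_iff_ne] at h
    have hlt : z &&& (z - 1) < z := Nat.and_le_right.trans_lt (by omega)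
    refine (ih h.2 (hlt.trans hz)).trans_lt (card_lt_card ⟨fun i ↦ ?_, fun hsub ↦ hlt.ne ?_⟩)
    · simp +contextual
    · refine Nat.eq_of_testBit_eq fun i ↦ ?_
      rcases lt_or_ge i m with hi | hi
      · have hbit : z.testBit i → z.testBit i ∧ (z - 1).testBit i := by
          simpa using @hsub ⟨i, hi⟩
        simpa using fun h ↦ (hbit h).2
      · rw [Nat.testBit_lt_two_pow ((hlt.trans hz).trans_le (Nat.pow_le_pow_right two_pos hi)),
          Nat.testBit_lt_two_pow (hz.trans_le (Nat.pow_le_pow_right two_pos hi))]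

theorem TernaryWord.Represents.le_hammingNorm {m d : ℕ} {x : TernaryWord} {v : Fin m → ZMod 3}
    (hx : x.Represents v) (h : hasBits d (x.support m)) : d ≤ hammingNorm v := by
  refine (le_card_testBit_of_hasBits h (Nat.mod_lt _ (by positivity))).trans_eq ?_
  simp [hx.testBit_support, hammingNorm]

end TernaryWords

section Search

variable {m : ℕ} {row : ℕ → TernaryWord} {G : ℕ → Fin m → ZMod 3} {x : TernaryWord}
  {v : Fin m → ZMod 3}

/-- Searches the sums of `x` with combinations of at least one and at most `k` of the rows below
`n`, and tests that each of them has weight at least `d`. -/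
def lightCombinationsHeavy (row : ℕ → TernaryWord) (m d : ℕ) : ℕ → ℕ → TernaryWord → Bool
  | 0, _, _ => true
  | _ + 1, 0, _ => true
  | n + 1, k + 1, x =>
    lightCombinationsHeavy row m d n (k + 1) x &&
      (hasBits d ((x.add (row n)).support m) &&
        lightCombinationsHeavy row m d n k (x.add (row n))) &&
      (hasBits d ((x.add (row n).neg).support m) &&
        lightCombinationsHeavy row m d n k (x.add (row n).neg))

theorem add_sum_fin_succ {n : ℕ} (u : Fin (n + 1) → ZMod 3) :
    v + ∑ i, u i • G i = v + u (Fin.last n) • G n + ∑ i : Fin n, u i.castSucc • G i := by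
  rw [Fin.sum_univ_castSucc, add_comm (∑ _, _), add_assoc]
  rfl

theorem eq_zero_or_eq_one_or_eq_neg_one (a : ZMod 3) : a = 0 ∨ a = 1 ∨ a = -1 := by
  decide +revert

theorem hammingNorm_fin_succ {n : ℕ} (u : Fin (n + 1) → ZMod 3) :
    hammingNorm u = hammingNorm (fun i : Fin n ↦ u i.castSucc) +
      if u (Fin.last n) ≠ 0 then 1 else 0 := by
  simp only [hammingNorm, card_filter, Fin.sum_univ_castSucc]

theorem le_hammingNorm_of_lightCombinationsHeavy {d n k : ℕ}
    (hG : ∀ i < n, (row i).Represents (G i)) (hx : x.Represents v)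
    (h : lightCombinationsHeavy row m d n k x) {u : Fin n → ZMod 3} (hu : u ≠ 0)
    (huk : hammingNorm u ≤ k) : d ≤ hammingNorm (v + ∑ i, u i • G i) := by
  induction n generalizing k x v with
  | zero => exact absurd (Subsingleton.elim u 0) hu
  | succ n ih =>
    obtain _ | k := k
    · exact absurd (hammingNorm_eq_zero.mp (Nat.le_zero.mp huk)) hu
    simp only [lightCombinationsHeavy, Bool.and_eq_true] at h
    obtain ⟨⟨h0, hpos, hpos'⟩, hneg, hneg'⟩ := h
    have hrow := hG n n.lt_succ_self
    have hG' : ∀ i < n, (row i).Represents (G i) := fun i hi ↦ hG i (hi.trans n.lt_succ_self)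
    set u' : Fin n → ZMod 3 := fun i ↦ u i.castSucc
    rw [hammingNorm_fin_succ] at huk
    have hstep {y : TernaryWord} {w : Fin m → ZMod 3} (hy : y.Represents w)
        (hd : hasBits d (y.support m)) (h : lightCombinationsHeavy row m d n k y)
        (hk : hammingNorm u' ≤ k) : d ≤ hammingNorm (w + ∑ i, u' i • G i) := by
      rcases eq_or_ne u' 0 with hu' | hu'
      · simpa [hu'] using hy.le_hammingNorm hd
      · exact ih hG' hy h hu' hk
    rw [add_sum_fin_succ]
    rcases eq_zero_or_eq_one_or_eq_neg_one (u (Fin.last n)) with hlast | hlast | hlast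
    · have hu' : u' ≠ 0 := fun hu' ↦ hu <| funext <| Fin.lastCases hlast fun i ↦ congrFun hu' i
      simpa [hlast] using ih hG' hx h0 hu' (by simpa [hlast] using huk)
    · simpa [hlast] using hstep (hx.add hrow) hpos hpos' (by simpa [hlast] using huk)
    · simpa [hlast] using hstep (hx.add hrow.neg) hneg hneg' (by simpa [hlast] using huk)

/-- Searches the sums of `x` with the combinations of the rows below `n` that have no zero
coefficient, and tests that none of them has letters with product `1`. Row `i` is the last one that
affects position `pivot i`, so the search is cut as soon as that letter is zero. -/
def fullCombinationsProdNeOne (row : ℕ → TernaryWord) (pivot : ℕ → Fin m) :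
    ℕ → TernaryWord → Bool
  | 0, x => x.support m != 2 ^ m - 1 || decide (∏ i : Fin m, x.letter i ≠ 1)
  | n + 1, x =>
    (!((x.add (row n)).support m).testBit (pivot n) ||
        fullCombinationsProdNeOne row pivot n (x.add (row n))) &&
      (!((x.add (row n).neg).support m).testBit (pivot n) ||
        fullCombinationsProdNeOne row pivot n (x.add (row n).neg))

theorem prod_ne_one_of_fullCombinationsProdNeOne {pivot : ℕ → Fin m} {n : ℕ}
    (hG : ∀ i < n, (row i).Represents (G i)) (hpivot : ∀ i < n, ∀ j < i, G j (pivot i) = 0)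
    (hx : x.Represents v) (h : fullCombinationsProdNeOne row pivot n x) {u : Fin n → ZMod 3}
    (hu : ∀ i, u i ≠ 0) : ∏ j, (v + ∑ i, u i • G i) j ≠ 1 := by
  induction n generalizing x v with
  | zero =>
    simp only [fullCombinationsProdNeOne, Bool.or_eq_true, bne_iff_ne, decide_eq_true_eq,
      hx.letter_eq] at h
    rw [Fin.sum_univ_zero, add_zero]
    intro hprod
    have hv (i : Fin m) : v i ≠ 0 := prod_ne_zero_iff.mp (hprod ▸ one_ne_zero) i (mem_univ i)
    exact h.elim (· (hx.support_eq_of_forall_ne_zero hv)) (· hprod)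
  | succ n ih =>
    simp only [fullCombinationsProdNeOne, Bool.and_eq_true, Bool.or_eq_true] at h
    have hrow := hG n n.lt_succ_self
    have hG' : ∀ i < n, (row i).Represents (G i) := fun i hi ↦ hG i (hi.trans n.lt_succ_self)
    have hstep {y : TernaryWord} {w : Fin m → ZMod 3} (hy : y.Represents w)
        (h : (!(y.support m).testBit (pivot n)) = true ∨
          fullCombinationsProdNeOne row pivot n y = true) :
        ∏ j, (w + ∑ i : Fin n, u i.castSucc • G i) j ≠ 1 := by
      rcases h with h | h
      · rw [hy.testBit_support] at h
        have hzero : (w + ∑ i : Fin n, u i.castSucc • G i) (pivot n) = 0 := by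
          simpa [hpivot n n.lt_succ_self] using h
        rw [prod_eq_zero (mem_univ _) hzero]
        exact zero_ne_one
      · exact ih hG' (fun i hi ↦ hpivot i (hi.trans n.lt_succ_self)) hy h fun i ↦ hu _
    rw [add_sum_fin_succ]
    rcases eq_zero_or_eq_one_or_eq_neg_one (u (Fin.last n)) with hlast | hlast | hlast
    · exact absurd hlast (hu _)
    · simpa [hlast] using hstep (hx.add hrow) h.1
    · simpa [hlast] using hstep (hx.add hrow.neg) h.2

end Search

section HankelCode

/-- The entries `h 0, …, h 34` of `hankelMatrix`. The word starts with
`1, 1, 0, -1, 1, 0, 1, 0, 1, 1, 0, 0, 0, 0, 0, 0, 0, 1` and continues by `h (i + 18) = -h i`. -/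
def hankelWord : TernaryWord :=
  ⟨2229075, 223084552⟩

/-- The Hankel matrix `(h (i + j))`. Reversing the order of its rows makes it negacirculant, so the
code that it generates is double negacirculant up to a permutation of coordinates. The symmetric
form has square `-1`. -/
def hankelMatrix : Matrix (Fin 18) (Fin 18) (ZMod 3) :=
  Matrix.of fun i j ↦ hankelWord.letter (i + j)

/-- The rows of the generator matrix `(1 | hankelMatrix)`, with indices read modulo `18`. -/
def generatorRow (i : ℕ) : Fin 36 → ZMod 3 :=
  Fin.append (Pi.single (Fin.ofNat 18 i) 1) (hankelMatrix (Fin.ofNat 18 i))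

/-- The bit masks of `generatorRow i`, for `i < 18`. -/
def generatorWord (i : ℕ) : TernaryWord :=
  ⟨2 ^ i ||| ((hankelWord.ones >>> i) <<< 18), (hankelWord.twos >>> i) <<< 18⟩

/-- The ternary code with generator matrix `(1 | hankelMatrix)`. -/
def hankelCode : Submodule (ZMod 3) (Fin 36 → ZMod 3) :=
  LinearMap.range (systematicEncoder hankelMatrix)

theorem hankelMatrix_mul_self : hankelMatrix * hankelMatrix = -1 := by
  decide +kernel

theorem transpose_hankelMatrix : hankelMatrixᵀ = hankelMatrix := by
  ext i j
  simp only [hankelMatrix, Matrix.transpose_apply, Matrix.of_apply, add_comm]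

theorem generatorWord_represents : ∀ i < 18, (generatorWord i).Represents (generatorRow i) := by
  unfold TernaryWord.Represents
  decide +kernel

theorem systematicEncoder_hankelMatrix (u : Fin 18 → ZMod 3) :
    systematicEncoder hankelMatrix u = ∑ i : Fin 18, u i • generatorRow i := by
  rw [systematicEncoder_eq_sum]
  refine sum_congr rfl fun i _ ↦ ?_
  rw [generatorRow, Fin.ofNat_val_eq_self]

theorem isSelfDual_hankelCode : IsSelfDual hankelCode :=
  isSelfDual_range_systematicEncoder (by rw [transpose_hankelMatrix, hankelMatrix_mul_self])

theorem lightCombinationsHeavy_generatorWord :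
    lightCombinationsHeavy generatorWord 36 7 18 3 ⟨0, 0⟩ := by
  decide +kernel

theorem nine_le_hammingNorm_of_mem_hankelCode {c : Fin 36 → ZMod 3} (hc : c ∈ hankelCode)
    (h0 : c ≠ 0) : 9 ≤ hammingNorm c := by
  obtain ⟨u, hu, hle, heq⟩ := exists_two_mul_hammingNorm_le hankelMatrix_mul_self hc h0
  have h3 := isSelfDual_hankelCode.three_dvd_hammingNorm hc
  by_contra! hlt
  -- A weight below `9` is at most `6`, and then `u` has weight at most `3`.
  have hzero : TernaryWord.Represents ⟨0, 0⟩ (0 : Fin 36 → ZMod 3) := by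
    unfold TernaryWord.Represents
    decide
  have h7 := le_hammingNorm_of_lightCombinationsHeavy generatorWord_represents hzero
    lightCombinationsHeavy_generatorWord hu (by omega)
  rw [zero_add, ← systematicEncoder_hankelMatrix, heq] at h7
  omega

/-- For each row a position at which all earlier rows vanish: since `h 10, …, h 16` are zero, the
column `17 - i` of `hankelMatrix` serves for `i ≤ 7`, and the identity block for the others. -/
def pivot (i : ℕ) : Fin 36 :=
  Fin.ofNat 36 (if i ≤ 7 then 35 - i else i)

theorem generatorRow_pivot : ∀ i < 17, ∀ j < i, generatorRow j (pivot i) = 0 := by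
  decide +kernel

theorem fullCombinationsProdNeOne_generatorWord :
    fullCombinationsProdNeOne generatorWord pivot 17 (generatorWord 17) := by
  decide +kernel

theorem prod_systematicEncoder_ne_one_of_last_eq_one {u : Fin 18 → ZMod 3} (hu : ∀ i, u i ≠ 0)
    (hlast : u (Fin.last 17) = 1) : ∏ i, systematicEncoder hankelMatrix u i ≠ 1 := by
  rw [systematicEncoder_hankelMatrix, Fin.sum_univ_castSucc, hlast, one_smul, add_comm (∑ _, _)]
  exact prod_ne_one_of_fullCombinationsProdNeOne
    (fun i hi ↦ generatorWord_represents i (hi.trans (by norm_num))) generatorRow_pivot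
    (generatorWord_represents 17 (by norm_num)) fullCombinationsProdNeOne_generatorWord
    fun i ↦ hu i.castSucc

theorem prod_ne_one_of_mem_hankelCode {c : Fin 36 → ZMod 3} (hc : c ∈ hankelCode) :
    ∏ i, c i ≠ 1 := by
  obtain ⟨u, rfl⟩ := hc
  intro hprod
  have hu (i : Fin 18) : u i ≠ 0 := by
    have := prod_ne_zero_iff.mp (hprod ▸ one_ne_zero) (Fin.castAdd 18 i) (mem_univ _)
    rwa [systematicEncoder_castAdd] at this
  rcases eq_zero_or_eq_one_or_eq_neg_one (u (Fin.last 17)) with hlast | hlast | hlast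
  · exact hu _ hlast
  · exact prod_systematicEncoder_ne_one_of_last_eq_one hu hlast hprod
  · refine prod_systematicEncoder_ne_one_of_last_eq_one (u := -u)
      (fun i ↦ neg_ne_zero.mpr (hu i)) (by rw [Pi.neg_apply, hlast, neg_neg]) ?_
    simp only [map_neg, Pi.neg_apply, prod_neg, card_univ, Fintype.card_fin, hprod]
    decide

end HankelCode

theorem exists_unimodular_dim36_min4_kissing42840_sigma12 :
    ∃ L : Set (EuclideanSpace ℝ (Fin 36)),
      IsUnimodularLattice L ∧ IsOddLattice L ∧ HasMinNorm L 4 ∧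
        numVecsOfNorm L 4 = 42840 ∧ HasSigma L 12 := by
  have hC := isSelfDual_hankelCode
  have hd : ∀ c ∈ hankelCode, c ≠ 0 → 9 ≤ hammingNorm c := fun _ ↦
    nine_le_hammingNorm_of_mem_hankelCode
  have hprod : ∀ c ∈ hankelCode, ∏ i, c i ≠ 1 := fun _ ↦ prod_ne_one_of_mem_hankelCode
  exact ⟨scaledEmbed 12 '' neighborLattice hankelCode,
    isUnimodularLattice_image_neighborLattice hC (by norm_num),
    isOddLattice_image_neighborLattice (by norm_num),
    hasMinNorm_four_image_neighborLattice hC hd hprod,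
    numVecsOfNorm_four_image_neighborLattice hC hd hprod,
    hasSigma_image_neighborLattice hC (by norm_num) (by norm_num) hd⟩
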